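/- arXiv:1802.06533 — 3 statements merged into one kernel-verified Lean document; each statement's English description precedes it below -/
import Mathlib

section
/- Let A be a commutative ring which is a ℚ-algebra, S a set of derivations of A, and I a prime ideal of A. Then the largest S-stable ideal of A contained in I is a prime ideal. -/
/-!
Seidenberg's argument: if a prime `Q` is minimal over a `d`-stable ideal `P` and its residue field
`K` has characteristic zero, then `Q` is `d`-stable. Indeed the Taylor series of `a`, with
coefficients `dⁿ a / n!` reduced modulo `Q`, defines a ring homomorphism `A → K⟦X⟧`. Its kernel is
prime because `K⟦X⟧` is a domain, and it lies between `P` and `Q`, so it equals `Q`; reading off the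
coefficient of `X` shows that `d` maps `Q` into itself. Now let `P` be the core of a prime `I`, and
choose a prime `Q ≤ I` minimal over `P`: it is stable under all of `S`, so maximality gives `P = Q`.
-/

section Taylor

open Finset PowerSeries
open scoped Nat

variable {R A K : Type*} [CommSemiring R] [CommSemiring A] [Algebra R A] [Field K] [CharZero K]

theorem derivation_iterate_mul (D : Derivation R A A) (n : ℕ) (a b : A) :
    D^[n] (a * b) = ∑ ij ∈ antidiagonal n, n.choose ij.1 • (D^[ij.1] a * D^[ij.2] b) := by
  induction n with
  | zero => simp
  | succ n ih =>
    rw [sum_antidiagonal_choose_succ_nsmul (fun i j ↦ D^[i] a * D^[j] b) n]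
    simp only [Function.iterate_succ_apply', ih, map_sum, map_nsmul, D.leibniz, smul_eq_mul,
      smul_add, sum_add_distrib]
    congr 1
    refine sum_congr rfl fun ⟨i, j⟩ hij ↦ ?_
    rw [n.choose_symm_of_eq_add (mem_antidiagonal.1 hij).symm, mul_comm (D^[j] b)]

theorem inv_factorial_mul_choose {n i j : ℕ} (h : i + j = n) :
    (n ! : K)⁻¹ * n.choose i = (i ! : K)⁻¹ * (j ! : K)⁻¹ := by
  subst h
  have : ((i + j)! : K) ≠ 0 := mod_cast (i + j).factorial_ne_zero
  rw [Nat.cast_add_choose]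
  field_simp

/-- The Taylor homomorphism `a ↦ ∑ₙ f (Dⁿ a) / n! Xⁿ` of a derivation `D` of `A`, with coefficients
taken in a field `K` of characteristic zero along `f : A →+* K`. As `K⟦X⟧` is a domain, the kernel
is a prime ideal. -/
noncomputable def derivationTaylorHom (D : Derivation R A A) (f : A →+* K) : A →+* K⟦X⟧ where
  toFun a := PowerSeries.mk fun n ↦ (n ! : K)⁻¹ * f (D^[n] a)
  map_zero' := by
    ext n
    simp
  map_one' := by
    ext n
    cases n <;> simp [coeff_one]
  map_add' a b := by
    ext n
    simp [mul_add]
  map_mul' a b := by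
    ext n
    simp only [coeff_mk, coeff_mul, derivation_iterate_mul, map_sum, nsmul_eq_mul, map_mul,
      map_natCast, mul_sum]
    refine sum_congr rfl fun ⟨i, j⟩ hij ↦ ?_
    rw [← mul_assoc, inv_factorial_mul_choose (mem_antidiagonal.1 hij), mul_mul_mul_comm]

theorem coeff_derivationTaylorHom (D : Derivation R A A) (f : A →+* K) (a : A) (n : ℕ) :
    coeff n (derivationTaylorHom D f a) = (n ! : K)⁻¹ * f (D^[n] a) := by
  simp [derivationTaylorHom]

theorem mem_ker_derivationTaylorHom {D : Derivation R A A} {f : A →+* K} {a : A} :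
    a ∈ RingHom.ker (derivationTaylorHom D f) ↔ ∀ n, D^[n] a ∈ RingHom.ker f := by
  simp [RingHom.mem_ker, PowerSeries.ext_iff, coeff_derivationTaylorHom, Nat.factorial_ne_zero]

end Taylor

theorem derivation_apply_mem_of_mem_minimalPrimes {R A : Type*} [CommSemiring R] [CommRing A]
    [Algebra R A] {D : Derivation R A A} {J Q : Ideal A} [CharZero (A ⧸ Q)]
    (hJ : ∀ x ∈ J, D x ∈ J) (hQ : Q ∈ J.minimalPrimes) {x : A} (hx : x ∈ Q) :
    D x ∈ Q := by
  have : Q.IsPrime := hQ.1.1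
  have : CharZero Q.ResidueField :=
    charZero_of_injective_algebraMap (Ideal.injective_algebraMap_quotient_residueField Q)
  let K := RingHom.ker (derivationTaylorHom D (algebraMap A Q.ResidueField))
  have mem_K {y : A} : y ∈ K ↔ ∀ n, D^[n] y ∈ Q := by
    rw [mem_ker_derivationTaylorHom, Ideal.ker_algebraMap_residueField]
  have J_le_K : J ≤ K := fun y hy ↦
    mem_K.2 fun n ↦ hQ.1.2 (Set.MapsTo.iterate (s := (J : Set A)) hJ n hy)
  have K_le_Q : K ≤ Q := fun y hy ↦ mem_K.1 hy 0
  have Q_le_K : Q ≤ K := hQ.2 ⟨RingHom.ker_isPrime _, J_le_K⟩ K_le_Q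
  exact mem_K.1 (Q_le_K hx) 1

theorem core_isPrime_of_isPrime_general {A : Type*} [CommRing A] (S : Set (A → A))
    (hS : ∀ d ∈ S, (∀ a b : A, d (a + b) = d a + d b) ∧
      (∀ a b : A, d (a * b) = a * d b + b * d a))
    (I : Ideal A) (hI : I.IsPrime) [CharZero (A ⧸ I)]
    (P : Ideal A) (hPle : P ≤ I)
    (hPstable : ∀ d ∈ S, ∀ x ∈ P, d x ∈ P)
    (hPmax : ∀ J : Ideal A, J ≤ I → (∀ d ∈ S, ∀ x ∈ J, d x ∈ J) → J ≤ P) :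
    P.IsPrime := by
  obtain ⟨Q, hQ, hQI⟩ := Ideal.exists_minimalPrimes_le hPle
  have : CharZero (A ⧸ Q) := (Ideal.Quotient.factor hQI).charZero
  have hQstable : ∀ d ∈ S, ∀ x ∈ Q, d x ∈ Q := fun d hd x hx ↦
    let D : Derivation ℤ A A :=
      .mk' (AddMonoidHom.mk' d (hS d hd).1).toIntLinearMap (hS d hd).2
    derivation_apply_mem_of_mem_minimalPrimes (D := D) (hPstable d hd) hQ hx
  have hPQ : P = Q := le_antisymm hQ.1.2 (hPmax Q hQI hQstable)
  exact hPQ ▸ hQ.1.1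

/-- Lemma 6.2(2) (differential-algebra form, after Dixmier 3.3.2): if `A` is a
commutative ring which is a `ℚ`-algebra, `S` is a set of derivations of `A`, and `I`
is a prime ideal of `A`, then the largest `S`-stable ideal `P` contained in `I`
(characterized by its universal property) is prime. -/
theorem core_isPrime_of_isPrime
    {A : Type*} [CommRing A] [Algebra ℚ A] (S : Set (A → A))
    (hS : ∀ d ∈ S, (∀ a b : A, d (a + b) = d a + d b) ∧
      (∀ a b : A, d (a * b) = a * d b + b * d a))
    (I : Ideal A) (hI : I.IsPrime)
    (P : Ideal A) (hPle : P ≤ I)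
    (hPstable : ∀ d ∈ S, ∀ x ∈ P, d x ∈ P)
    (hPmax : ∀ J : Ideal A, J ≤ I → (∀ d ∈ S, ∀ x ∈ J, d x ∈ J) → J ≤ P) :
    P.IsPrime := by
  have : CharZero (A ⧸ I) := algebraRat.charZero (A ⧸ I)
  exact core_isPrime_of_isPrime_general S hS I hI P hPle hPstable hPmax
end

section
/- Let A be a commutative ring which is a ℚ-algebra, S a set of derivations of A, and I a radical ideal of A. Then the largest S-stable ideal of A contained in I is a radical ideal. -/
/-!
If a derivation `D` preserves an ideal `P`, then applying `D` to `x ^ (n + 1) * D x ^ j ∈ P` and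
multiplying by `D x` shows `(n + 1) • (x ^ n * D x ^ (j + 2)) ∈ P`. When the factor `n + 1` can be
cancelled modulo `P`, iterating from `x ^ n ∈ P` leads to a power of `D x` in `P`, so `D` preserves
`P.radical`. The core `P` of an ideal `I` allows this cancellation as soon as `I` does: the elements
with a nonzero integer multiple in `P` form a stable ideal contained in `I`, hence in `P`. If `I` is
radical, then `P.radical` is itself a stable ideal contained in `I`, hence in `P`.
-/

section Saturation

variable {A : Type*} [Semiring A]

/-- The saturation of an ideal `I` with respect to multiplication by positive integers:
over a ring, the preimage of the additive torsion of `A ⧸ I`. It serves to transfer cancellation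
of integers from an ideal to its core. -/
def nsmulSaturation (I : Ideal A) : Ideal A where
  carrier := {a | ∃ n : ℕ, n ≠ 0 ∧ n • a ∈ I}
  zero_mem' := ⟨1, one_ne_zero, by simp⟩
  add_mem' := by
    rintro a b ⟨m, hm, hma⟩ ⟨n, hn, hnb⟩
    refine ⟨m * n, mul_ne_zero hm hn, ?_⟩
    rw [smul_add, mul_nsmul, mul_nsmul']
    exact add_mem (nsmul_mem hma n) (nsmul_mem hnb m)
  smul_mem' := by
    rintro c a ⟨n, hn, hna⟩
    exact ⟨n, hn, by simpa only [smul_eq_mul, mul_smul_comm] using I.mul_mem_left c hna⟩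

theorem nsmulSaturation_mono {I J : Ideal A} (h : I ≤ J) : nsmulSaturation I ≤ nsmulSaturation J :=
  fun _ ⟨n, hn, hna⟩ => ⟨n, hn, h hna⟩

theorem map_mem_nsmulSaturation {B : Type*} [Semiring B] (f : A →+ B) {I : Ideal A} {J : Ideal B}
    (hf : ∀ a ∈ I, f a ∈ J) {a : A} (ha : a ∈ nsmulSaturation I) : f a ∈ nsmulSaturation J := by
  obtain ⟨n, hn, hna⟩ := ha
  exact ⟨n, hn, map_nsmul f n a ▸ hf _ hna⟩

theorem nsmulSaturated_iff_nsmulSaturation_le {I : Ideal A} :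
    I.toAddSubmonoid.NSMulSaturated ↔ nsmulSaturation I ≤ I := by
  constructor
  · rintro h a ⟨n, hn, hna⟩
    exact (h hna).resolve_left hn
  · intro h n a hna
    exact or_iff_not_imp_left.2 fun hn => h ⟨n, hn, hna⟩

end Saturation

theorem nsmulSaturated_of_submodule {K M : Type*} [DivisionSemiring K] [CharZero K]
    [AddCommMonoid M] [Module K M] (N : Submodule K M) : N.toAddSubmonoid.NSMulSaturated := by
  refine fun n a hna => or_iff_not_imp_left.2 fun hn => ?_
  have hn' : (n : K) ≠ 0 := Nat.cast_ne_zero.2 hn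
  rw [← inv_smul_smul₀ hn' a, Nat.cast_smul_eq_nsmul]
  exact N.smul_mem (n : K)⁻¹ hna

theorem exists_derivation_coe_eq {A M : Type*} [CommRing A] [AddCommGroup M] [Module A M]
    {d : A → M} (hadd : ∀ a b, d (a + b) = d a + d b)
    (hmul : ∀ a b, d (a * b) = a • d b + b • d a) : ∃ D : Derivation ℤ A M, ⇑D = d :=
  ⟨.mk' (AddMonoidHom.mk' d hadd).toIntLinearMap hmul, rfl⟩

theorem smul_derivation_pow {R A M : Type*} [CommSemiring R] [CommSemiring A] [AddCommMonoid M]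
    [Algebra R A] [Module A M] [Module R M] (D : Derivation R A M) (a : A) (n : ℕ) :
    a • D (a ^ n) = n • a ^ n • D a := by
  cases n with
  | zero => simp
  | succ n => rw [D.leibniz_pow, Nat.add_sub_cancel, smul_comm, smul_smul, ← pow_succ']

section Derivation

variable {R A : Type*} [CommSemiring R] [CommRing A] [Algebra R A] (D : Derivation R A A)
  {P : Ideal A}

theorem nsmul_pow_mul_derivation_pow_mem (hP : ∀ a ∈ P, D a ∈ P) {x : A} {n j : ℕ}
    (h : x ^ (n + 1) * D x ^ j ∈ P) : (n + 1) • (x ^ n * D x ^ (j + 2)) ∈ P := by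
  have mul_leibniz : D x * D (x ^ (n + 1) * D x ^ j) =
      (n + 1) • (x ^ n * D x ^ (j + 2)) + j • D (D x) * (x ^ (n + 1) * D x ^ j) := by
    calc D x * D (x ^ (n + 1) * D x ^ j)
        = x ^ (n + 1) * (D x • D (D x ^ j)) + D x ^ (j + 1) * D (x ^ (n + 1)) := by
          simp only [D.leibniz, smul_eq_mul]
          ring
      _ = (n + 1) • (x ^ n * D x ^ (j + 2)) + j • D (D x) * (x ^ (n + 1) * D x ^ j) := by
          rw [smul_derivation_pow, D.leibniz_pow, Nat.add_sub_cancel]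
          simp only [nsmul_eq_mul, smul_eq_mul]
          ring
  have sum_mem := P.mul_mem_left (D x) (hP _ h)
  rw [mul_leibniz] at sum_mem
  exact (P.add_mem_iff_left (P.mul_mem_left _ h)).1 sum_mem

theorem derivation_mem_radical_of_pow_mul_mem (hPsat : P.toAddSubmonoid.NSMulSaturated)
    (hP : ∀ a ∈ P, D a ∈ P) {x : A} {n j : ℕ} (h : x ^ n * D x ^ j ∈ P) : D x ∈ P.radical := by
  induction n generalizing j with
  | zero => exact ⟨j, by simpa only [pow_zero, one_mul] using h⟩
  | succ n ih =>
    exact ih ((hPsat (nsmul_pow_mul_derivation_pow_mem D hP h)).resolve_left n.succ_ne_zero)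

theorem derivation_mem_radical (hPsat : P.toAddSubmonoid.NSMulSaturated)
    (hP : ∀ a ∈ P, D a ∈ P) {x : A} (hx : x ∈ P.radical) : D x ∈ P.radical := by
  obtain ⟨n, hn⟩ := hx
  exact derivation_mem_radical_of_pow_mul_mem D hPsat hP (n := n) (j := 0) (by simpa using hn)

end Derivation

theorem core_radical_of_radical_general
    {A : Type*} [CommRing A] (S : Set (A → A))
    (hS : ∀ d ∈ S, (∀ a b : A, d (a + b) = d a + d b) ∧
      (∀ a b : A, d (a * b) = a * d b + b * d a))
    (I : Ideal A) (hIsat : I.toAddSubmonoid.NSMulSaturated) (hI : I.radical = I)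
    (P : Ideal A) (hPle : P ≤ I)
    (hPstable : ∀ d ∈ S, ∀ x ∈ P, d x ∈ P)
    (hPmax : ∀ J : Ideal A, J ≤ I → (∀ d ∈ S, ∀ x ∈ J, d x ∈ J) → J ≤ P) :
    P.radical = P := by
  have hPsat : P.toAddSubmonoid.NSMulSaturated := by
    refine nsmulSaturated_iff_nsmulSaturation_le.2 (hPmax _ ?_ fun d hd x hx => ?_)
    · exact (nsmulSaturation_mono hPle).trans (nsmulSaturated_iff_nsmulSaturation_le.1 hIsat)
    · exact map_mem_nsmulSaturation (AddMonoidHom.mk' d (hS d hd).1) (hPstable d hd) hx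
  refine le_antisymm (hPmax _ ?_ fun d hd x hx => ?_) Ideal.le_radical
  · exact (Ideal.radical_mono hPle).trans hI.le
  · obtain ⟨D, rfl⟩ := exists_derivation_coe_eq (hS d hd).1 (hS d hd).2
    exact derivation_mem_radical D hPsat (hPstable D hd) hx

/-- Lemma 6.2(3) (differential-algebra form): if `A` is a commutative ring which is a
`ℚ`-algebra, `S` is a set of derivations of `A`, and `I` is a radical ideal of `A`,
then the largest `S`-stable ideal `P` contained in `I` (characterized by its universal
property) is radical. -/
theorem core_radical_of_radical
    {A : Type*} [CommRing A] [Algebra ℚ A] (S : Set (A → A))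
    (hS : ∀ d ∈ S, (∀ a b : A, d (a + b) = d a + d b) ∧
      (∀ a b : A, d (a * b) = a * d b + b * d a))
    (I : Ideal A) (hI : I.radical = I)
    (P : Ideal A) (hPle : P ≤ I)
    (hPstable : ∀ d ∈ S, ∀ x ∈ P, d x ∈ P)
    (hPmax : ∀ J : Ideal A, J ≤ I → (∀ d ∈ S, ∀ x ∈ J, d x ∈ J) → J ≤ P) :
    P.radical = P :=
  core_radical_of_radical_general S hS I (nsmulSaturated_of_submodule (I.restrictScalars ℚ)) hI P
    hPle hPstable hPmax
end

section
/- Let A be a commutative ring which is a ℚ-algebra, S a set of derivations of A, and I an ideal of A such that d(I) ⊆ I for all d ∈ S. Then every minimal prime ideal p of A over I (i.e., every p ∈ minimalPrimes of I) satisfies d(p) ⊆ p for all d ∈ S. -/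
/-!
In the localization at a minimal prime `p` over `I`, the ideal `p` becomes the radical of `I`, so
every `x ∈ p` satisfies `t * x ^ n ∈ I` for some `t ∉ p`. Suppose `d x ∉ p`. Differentiating this
relation and multiplying by `t` lowers the exponent of `x` by one, at the cost of replacing `t` by
`n * t ^ 2 * d x`, which is again outside `p` because the residue characteristic of `p` is zero.
Iterating down to exponent zero produces an element of `I` outside `p`, which is absurd.
-/

theorem exists_notMem_mul_pow_mem_of_mem_minimalPrimes {A : Type*} [CommSemiring A] {I p : Ideal A}
    (hp : p ∈ I.minimalPrimes) {x : A} (hx : x ∈ p) : ∃ t ∉ p, ∃ n : ℕ, t * x ^ n ∈ I := by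
  have : p.IsPrime := hp.isPrime
  let Aₚ := Localization.AtPrime p
  have hx_radical : algebraMap A Aₚ x ∈ (I.map (algebraMap A Aₚ)).radical := by
    rw [IsLocalization.AtPrime.radical_map_of_mem_minimalPrimes Aₚ p I hp]
    exact Ideal.mem_map_of_mem _ hx
  obtain ⟨n, hn⟩ := hx_radical
  rw [← map_pow, IsLocalization.algebraMap_mem_map_algebraMap_iff p.primeCompl] at hn
  obtain ⟨t, ht, htx⟩ := hn
  exact ⟨t, ht, n, htx⟩

theorem map_pow_succ_of_leibniz {A : Type*} [CommSemiring A] {d : A → A}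
    (hd : ∀ a b : A, d (a * b) = a * d b + b * d a) (x : A) (n : ℕ) :
    d (x ^ (n + 1)) = ((n + 1 : ℕ) : A) * x ^ n * d x := by
  induction n with
  | zero => simp
  | succ n ih =>
    rw [pow_succ x (n + 1), hd, ih]
    push_cast
    ring

section Leibniz

variable {A : Type*} [CommRing A] {d : A → A}

theorem mul_pow_mem_of_mul_pow_succ_mem_of_leibniz
    (hd : ∀ a b : A, d (a * b) = a * d b + b * d a) {I : Ideal A} (hI : ∀ x ∈ I, d x ∈ I)
    {t x : A} {n : ℕ} (h : t * x ^ (n + 1) ∈ I) :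
    ((n + 1 : ℕ) : A) * t ^ 2 * d x * x ^ n ∈ I := by
  have hdiff : t * d (t * x ^ (n + 1)) - d t * (t * x ^ (n + 1)) ∈ I :=
    I.sub_mem (I.mul_mem_left t (hI _ h)) (I.mul_mem_left (d t) h)
  have hexpand : t * d (t * x ^ (n + 1)) - d t * (t * x ^ (n + 1)) =
      ((n + 1 : ℕ) : A) * t ^ 2 * d x * x ^ n := by
    rw [hd, map_pow_succ_of_leibniz hd]
    ring
  rwa [hexpand] at hdiff

theorem natCast_notMem_of_charZero_quotient {p : Ideal A} [CharZero (A ⧸ p)] {n : ℕ} (hn : n ≠ 0) :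
    (n : A) ∉ p := by
  rw [← Ideal.Quotient.eq_zero_iff_mem, map_natCast]
  exact Nat.cast_ne_zero.mpr hn

theorem map_mem_of_mul_pow_mem_of_leibniz
    (hd : ∀ a b : A, d (a * b) = a * d b + b * d a) {I p : Ideal A} (hI : ∀ x ∈ I, d x ∈ I)
    [p.IsPrime] [CharZero (A ⧸ p)] (hIp : I ≤ p) {t x : A} (ht : t ∉ p) {n : ℕ}
    (h : t * x ^ n ∈ I) : d x ∈ p := by
  by_contra hdx
  induction n generalizing t with
  | zero => exact ht (hIp (by simpa using h))
  | succ n ih =>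
    have hcoeff : ((n + 1 : ℕ) : A) * t ^ 2 * d x ∉ p :=
      p.primeCompl.mul_mem
        (p.primeCompl.mul_mem (natCast_notMem_of_charZero_quotient n.succ_ne_zero)
          (p.primeCompl.pow_mem ht 2))
        hdx
    exact ih hcoeff (mul_pow_mem_of_mul_pow_succ_mem_of_leibniz hd hI h)

theorem minimalPrimes_stable_of_stable_general
    (hd : ∀ a b : A, d (a * b) = a * d b + b * d a) {I p : Ideal A} (hI : ∀ x ∈ I, d x ∈ I)
    (hp : p ∈ I.minimalPrimes) [CharZero (A ⧸ p)] {x : A} (hx : x ∈ p) : d x ∈ p := by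
  have : p.IsPrime := hp.isPrime
  obtain ⟨t, ht, n, htx⟩ := exists_notMem_mul_pow_mem_of_mem_minimalPrimes hp hx
  exact map_mem_of_mul_pow_mem_of_leibniz hd hI hp.le ht htx

end Leibniz

/-- Corollary 6.3 (differential-algebra form): if `A` is a commutative ring which is a
`ℚ`-algebra, `S` is a set of derivations of `A`, and `I` is an `S`-stable ideal of `A`,
then every minimal prime `p` over `I` is `S`-stable. -/
theorem minimalPrimes_stable_of_stable
    {A : Type*} [CommRing A] [Algebra ℚ A] (S : Set (A → A))
    (hS : ∀ d ∈ S, (∀ a b : A, d (a + b) = d a + d b) ∧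
      (∀ a b : A, d (a * b) = a * d b + b * d a))
    (I : Ideal A) (hI : ∀ d ∈ S, ∀ x ∈ I, d x ∈ I)
    (p : Ideal A) (hp : p ∈ I.minimalPrimes) :
    ∀ d ∈ S, ∀ x ∈ p, d x ∈ p := by
  have : Nontrivial (A ⧸ p) := Ideal.Quotient.nontrivial_iff.mpr hp.isPrime.ne_top
  have : CharZero (A ⧸ p) := algebraRat.charZero (A ⧸ p)
  exact fun d hd _ ↦ minimalPrimes_stable_of_stable_general (hS d hd).2 (hI d hd) hp
end
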